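/- arXiv:gr-qc/0404039 — 12 statements merged into one kernel-verified Lean document; each statement's English description precedes it below -/
import Mathlib

section
/- For every 0 < l < 1, the function F_l satisfies lim_{q→∞} q·F_l(q) = 1; i.e. for large arguments the inverse-triad eigenvalue function reproduces the classical inverse q⁻¹. -/
/-- The (large-j) eigenvalue function of the inverse triad operator in loop
quantum cosmology, with ambiguity parameter l:
F_l(q) = (2l(l+1)(l+2)/3)^{1/(l−1)} · [ (l+1)((q+1)^{l+2} − |q−1|^{l+2})
  − (l+2)q((q+1)^{l+1} − sgn(q−1)|q−1|^{l+1}) ]^{1/(1−l)}. -/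
noncomputable def invTriadF (l q : ℝ) : ℝ :=
  (2 * l * (l + 1) * (l + 2) / 3) ^ ((1 : ℝ) / (l - 1)) *
    ((l + 1) * ((q + 1) ^ (l + 2) - |q - 1| ^ (l + 2))
      - (l + 2) * q * ((q + 1) ^ (l + 1)
        - Real.sign (q - 1) * |q - 1| ^ (l + 1))) ^ ((1 : ℝ) / (1 - l))

open Filter Topology in
theorem invTriad_aux (l : ℝ) :
    Tendsto (fun x : ℝ => ((l + 1) * ((1 + x) ^ (l + 2) - (1 - x) ^ (l + 2))
      - (l + 2) * ((1 + x) ^ (l + 1) - (1 - x) ^ (l + 1))) / x ^ 3) (𝓝[>] 0)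
      (𝓝 (2 * l * (l + 1) * (l + 2) / 3)) := by
  have hp : ∀ (a x : ℝ), 0 < 1 + x → HasDerivAt (fun x : ℝ => (1 + x) ^ a) (a * (1 + x) ^ (a - 1)) x := by
    intro a x hx
    have h := ((hasDerivAt_id x).const_add 1).rpow_const (p := a) (Or.inl hx.ne')
    simp only [id] at h
    convert h using 1
    ring
  have hm : ∀ (a x : ℝ), 0 < 1 - x → HasDerivAt (fun x : ℝ => (1 - x) ^ a) (-(a * (1 - x) ^ (a - 1))) x := by
    intro a x hx
    have h := ((hasDerivAt_id x).const_sub 1).rpow_const (p := a) (Or.inl hx.ne')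
    simp only [id] at h
    convert h using 1
    ring
  have hd : ∀ x : ℝ, 0 < 1 + x → 0 < 1 - x → HasDerivAt
      (fun x : ℝ => (l + 1) * ((1 + x) ^ (l + 2) - (1 - x) ^ (l + 2))
      - (l + 2) * ((1 + x) ^ (l + 1) - (1 - x) ^ (l + 1)))
      ((l + 1) * (l + 2) * (x * ((1 + x) ^ l - (1 - x) ^ l))) x := by
    intro x h1 h2
    have h := (((hp (l + 2) x h1).sub (hm (l + 2) x h2)).const_mul (l + 1)).sub
      (((hp (l + 1) x h1).sub (hm (l + 1) x h2)).const_mul (l + 2))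
    refine h.congr_deriv ?_
    rw [show l + 2 - 1 = l + 1 by ring, show l + 1 - 1 = l by ring,
      Real.rpow_add_one h1.ne', Real.rpow_add_one h2.ne']
    ring
  have hev : ∀ᶠ x : ℝ in 𝓝[>] 0, 0 < x ∧ x < 1 := Ioo_mem_nhdsGT one_pos
  refine HasDerivAt.lhopital_zero_nhdsGT
    (f' := fun x => (l + 1) * (l + 2) * (x * ((1 + x) ^ l - (1 - x) ^ l)))
    (g' := fun x => 3 * x ^ 2) ?_ ?_ ?_ ?_ ?_ ?_
  · filter_upwards [hev] with x hx
    exact hd x (by linarith [hx.1]) (by linarith [hx.2])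
  · filter_upwards [hev] with x hx
    simpa using hasDerivAt_pow 3 x
  · filter_upwards [hev] with x hx
    have := hx.1
    positivity
  · have h := (hd 0 (by norm_num) (by norm_num)).continuousAt.tendsto
    simp only [add_zero, sub_zero, Real.one_rpow, sub_self, mul_zero] at h
    exact h.mono_left nhdsWithin_le_nhds
  · have h := (hasDerivAt_pow 3 (0 : ℝ)).continuousAt.tendsto
    simp only [ne_eq, OfNat.ofNat_ne_zero, not_false_eq_true, zero_pow] at h
    exact h.mono_left nhdsWithin_le_nhds
  · have h := ((hp l 0 (by norm_num)).sub (hm l 0 (by norm_num))).tendsto_slope_zero_right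
    have h2 := h.const_mul ((l + 1) * (l + 2) / 3)
    simp only [add_zero, sub_zero, Real.one_rpow] at h2
    have e : (l + 1) * (l + 2) / 3 * (l * 1 - -(l * 1)) = 2 * l * (l + 1) * (l + 2) / 3 := by ring
    rw [e] at h2
    refine h2.congr' ?_
    filter_upwards [hev] with x hx
    have := hx.1.ne'
    simp
    field_simp

/-- For every 0 < l < 1, lim_{q→∞} q·F_l(q) = 1: for large arguments the
inverse-triad eigenvalue function reproduces the classical inverse q⁻¹. -/
theorem invTriadF_classical_limit_at_top (l : ℝ) (hl0 : 0 < l) (hl1 : l < 1) :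
    Filter.Tendsto (fun q : ℝ => q * invTriadF l q) Filter.atTop (nhds 1) := by
  have hc : 0 < 2 * l * (l + 1) * (l + 2) / 3 := by positivity
  have hR := (invTriad_aux l).comp tendsto_inv_atTop_nhdsGT_zero
  have hlim := (hR.rpow_const (p := 1 / (1 - l)) (Or.inl hc.ne')).const_mul
    ((2 * l * (l + 1) * (l + 2) / 3) ^ ((1 : ℝ) / (l - 1)))
  rw [← Real.rpow_add hc, show 1 / (l - 1) + 1 / (1 - l) = 0 by
    rw [show l - 1 = -(1 - l) by ring, one_div_neg_eq_neg_one_div]; ring, Real.rpow_zero] at hlim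
  refine hlim.congr' ?_
  filter_upwards [hR.eventually (lt_mem_nhds hc), Filter.eventually_gt_atTop 1] with q h0 hq
  have hq0 : 0 < q := by linarith
  have h1 : q + 1 = q * (1 + q⁻¹) := by field_simp
  have h2 : q - 1 = q * (1 - q⁻¹) := by field_simp
  have hi : 0 < q⁻¹ := by positivity
  have hi2 : q⁻¹ < 1 := inv_lt_one_of_one_lt₀ hq
  simp only [Function.comp] at h0 ⊢
  unfold invTriadF
  rw [Real.sign_of_pos (by linarith), abs_of_pos (by linarith : 0 < q - 1), h1, h2]
  rw [Real.mul_rpow hq0.le (by linarith), Real.mul_rpow hq0.le (by linarith),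
    Real.mul_rpow hq0.le (by linarith), Real.mul_rpow hq0.le (by linarith)]
  set A := (1 + q⁻¹) ^ (l + 2)
  set B := (1 - q⁻¹) ^ (l + 2)
  set C := (1 + q⁻¹) ^ (l + 1)
  set D := (1 - q⁻¹) ^ (l + 1)
  set R := ((l + 1) * (A - B) - (l + 2) * (C - D)) / q⁻¹ ^ 3 with hRdef
  have e2 : q ^ (l + 2) = q ^ (l - 1) * q ^ 3 := by
    rw [← Real.rpow_natCast, ← Real.rpow_add hq0]; congr 1; push_cast; ring
  have e1 : q ^ (l + 1) = q ^ (l - 1) * q ^ 2 := by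
    rw [← Real.rpow_natCast, ← Real.rpow_add hq0]; congr 1; push_cast; ring
  have key : (l + 1) * (q ^ (l + 2) * A - q ^ (l + 2) * B) -
      (l + 2) * q * (q ^ (l + 1) * C - 1 * (q ^ (l + 1) * D)) = q ^ (l - 1) * R := by
    rw [e1, e2, hRdef, inv_pow, div_inv_eq_mul]
    ring
  rw [key, Real.mul_rpow (by positivity) h0.le, ← Real.rpow_mul hq0.le,
    show (l - 1) * (1 / (1 - l)) = -1 by
      have : 1 - l ≠ 0 := by linarith
      field_simp; ring, Real.rpow_neg_one]
  field_simp
end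

section
/- For every 0 < l < 1, the function F_l satisfies lim_{q→0⁺} F_l(q) / (3q/(l+1))^{1/(1−l)} = 1; in particular F_l(q) → 0 as q → 0⁺, so the quantized inverse triad component vanishes rather than diverges at small triad values. -/
/-- For every 0 < l < 1, F_l(q) ∼ (3q/(l+1))^{1/(1−l)} as q → 0⁺; in particular
F_l(q) → 0 as q → 0⁺, so the quantized inverse triad component vanishes rather
than diverges at small triad values. -/
theorem invTriadF_small_q_behavior (l : ℝ) (hl0 : 0 < l) (hl1 : l < 1) :
    Filter.Tendsto
        (fun q : ℝ => invTriadF l q / (3 * q / (l + 1)) ^ ((1 : ℝ) / (1 - l)))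
        (nhdsWithin 0 (Set.Ioi 0)) (nhds 1)
      ∧ Filter.Tendsto (fun q : ℝ => invTriadF l q)
        (nhdsWithin 0 (Set.Ioi 0)) (nhds 0) := by
  have ha : 0 < (1:ℝ) / (1 - l) := by
    have : 0 < 1 - l := by linarith
    positivity
  have hD : HasDerivAt (fun q : ℝ => (l + 1) * ((q + 1) ^ (l + 2) - (1 - q) ^ (l + 2))
      - (l + 2) * q * ((q + 1) ^ (l + 1) + (1 - q) ^ (l + 1))) (2 * l * (l + 2)) 0 := by
    have h1 : HasDerivAt (fun q : ℝ => q + 1) 1 0 := (hasDerivAt_id (0:ℝ)).add_const 1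
    have h2 : HasDerivAt (fun q : ℝ => 1 - q) (-1) 0 := (hasDerivAt_id (0:ℝ)).const_sub 1
    have h1p := fun p : ℝ => h1.rpow_const (p := p) (Or.inl (by norm_num))
    have h2p := fun p : ℝ => h2.rpow_const (p := p) (Or.inl (by norm_num))
    have h3 : HasDerivAt (fun q : ℝ => (l + 2) * q) ((l + 2) * 1) 0 :=
      (hasDerivAt_id (0:ℝ)).const_mul (l + 2)
    have h := (((h1p (l + 2)).sub (h2p (l + 2))).const_mul (l + 1)).sub
      (h3.mul ((h1p (l + 1)).add (h2p (l + 1))))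
    refine HasDerivAt.congr_deriv h ?_
    simp
    ring
  have hS : Filter.Tendsto (fun q : ℝ => ((l + 1) * ((q + 1) ^ (l + 2) - (1 - q) ^ (l + 2))
      - (l + 2) * q * ((q + 1) ^ (l + 1) + (1 - q) ^ (l + 1))) / q)
      (nhdsWithin 0 (Set.Ioi 0)) (nhds (2 * l * (l + 2))) := by
    have h := hD.tendsto_slope_zero_right
    refine h.congr fun q => ?_
    simp
    ring
  have hc : 0 < 2 * l * (l + 2) := by positivity
  have hR : Filter.Tendsto
        (fun q : ℝ => invTriadF l q / (3 * q / (l + 1)) ^ ((1 : ℝ) / (1 - l)))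
        (nhdsWithin 0 (Set.Ioi 0)) (nhds 1) := by
    have h1 := (hS.div_const (2 * l * (l + 2))).rpow_const
      (p := (1:ℝ) / (1 - l)) (Or.inr ha.le)
    rw [div_self hc.ne', Real.one_rpow] at h1
    refine h1.congr' ?_
    have hlt : ∀ᶠ q : ℝ in nhdsWithin 0 (Set.Ioi 0), q < 1 :=
      nhdsWithin_le_nhds (eventually_lt_nhds one_pos)
    filter_upwards [self_mem_nhdsWithin, hlt, hS.eventually (eventually_gt_nhds hc)]
      with q hq0 hq1 hpos
    have hq0 : 0 < q := hq0
    unfold invTriadF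
    rw [abs_of_neg (by linarith : q - 1 < 0), Real.sign_of_neg (by linarith : q - 1 < 0), neg_sub]
    have e : (l + 1) * ((q + 1) ^ (l + 2) - (1 - q) ^ (l + 2)) - (l + 2) * q * ((q + 1) ^ (l + 1)
        - -1 * (1 - q) ^ (l + 1)) = (l + 1) * ((q + 1) ^ (l + 2) - (1 - q) ^ (l + 2))
      - (l + 2) * q * ((q + 1) ^ (l + 1) + (1 - q) ^ (l + 1)) := by ring
    rw [e]
    generalize (l + 1) * ((q + 1) ^ (l + 2) - (1 - q) ^ (l + 2))
      - (l + 2) * q * ((q + 1) ^ (l + 1) + (1 - q) ^ (l + 1)) = G at hpos ⊢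
    have hG : 0 < G := by
      have := mul_pos hpos hq0
      rwa [div_mul_cancel₀ _ hq0.ne'] at this
    have e2 : (1:ℝ) / (l - 1) = -(1 / (1 - l)) := by
      rw [← neg_sub 1 l, div_neg]
    rw [e2, Real.rpow_neg (by positivity), ← Real.inv_rpow (by positivity),
      ← Real.mul_rpow (by positivity) hG.le, ← Real.div_rpow (by positivity) (by positivity)]
    congr 1
    field_simp
  refine ⟨hR, ?_⟩
  have hZ : Filter.Tendsto (fun q : ℝ => (3 * q / (l + 1)) ^ ((1 : ℝ) / (1 - l)))
      (nhdsWithin 0 (Set.Ioi 0)) (nhds 0) := by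
    have h0 : Filter.Tendsto (fun q : ℝ => 3 * q / (l + 1)) (nhds 0) (nhds 0) := by
      have : Continuous (fun q : ℝ => 3 * q / (l + 1)) := by fun_prop
      simpa using this.tendsto 0
    have h1 := (h0.rpow_const (p := (1:ℝ) / (1 - l)) (Or.inr ha.le))
    rw [Real.zero_rpow ha.ne'] at h1
    exact h1.mono_left nhdsWithin_le_nhds
  have hM := hR.mul hZ
  rw [mul_zero] at hM
  refine hM.congr' ?_
  filter_upwards [self_mem_nhdsWithin] with q hq
  have hq0 : 0 < q := hq
  have : 0 < (3 * q / (l + 1)) ^ ((1 : ℝ) / (1 - l)) := by positivity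
  exact div_mul_cancel₀ _ this.ne'
end

section
/- Let L ≥ 2 and μ, ν > 0. Define D = μ^{−3L}(ν² + ν^{−2}) + μ^{−6}(ν^L + ν^{−L}) + (ν^{L−2} + ν^{−(L−2)}), a₊ = 2(L−1)μ^{−3L}(ν² + ν^{−2}) + (4−L)μ^{−6}(ν^L + ν^{−L}) − (L+2)(ν^{L−2} + ν^{−(L−2)}), and a₋ = 2μ^{−3L}(ν² − ν^{−2}) + Lμ^{−6}(ν^L − ν^{−L}) + (L−2)(ν^{L−2} − ν^{−(L−2)}). Then a₊² + a₋² < 4(L+2)²D², and consequently for every φ ∈ ℝ the eigenvalue λ = (1/√3)[2(L+2) − (a₊/D)cos φ + (a₋/D)sin φ] is strictly positive. -/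
lemma aux_cs (x y X Y K r : ℝ) (h : x ^ 2 + y ^ 2 < K ^ 2) (hK : 0 < K) (hr : 0 < r)
    (hX : X ^ 2 + Y ^ 2 = r ^ 2) : x * X + y * Y < K * r := by
  apply lt_of_pow_lt_pow_left₀ 2 (by positivity)
  have h1 : (x ^ 2 + y ^ 2) * r ^ 2 < K ^ 2 * r ^ 2 := by
    apply mul_lt_mul_of_pos_right h; positivity
  rw [← hX] at h1
  have h2 : (K * r) ^ 2 = K ^ 2 * (X ^ 2 + Y ^ 2) := by rw [hX]; ring
  rw [h2]
  nlinarith [sq_nonneg (x * Y - y * X)]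

/-- Stability of the Kasner solution under the near-regime effective potential:
for L ≥ 2 and μ, ν > 0, with D, aP, aM the quantities built from the logarithmic
derivatives of the near potential evaluated on the Kasner solution, one has
aP² + aM² < 4(L+2)²D², and consequently the stability eigenvalue
λ = (1/√3)[2(L+2) − (aP/D)cos φ + (aM/D)sin φ] is strictly positive for all φ. -/
theorem kasner_stability_eigenvalue_positive
    (L μ ν : ℝ) (hL : 2 ≤ L) (hμ : 0 < μ) (hν : 0 < ν)
    (D aP aM : ℝ)
    (hD : D = μ ^ (-(3 * L)) * (ν ^ (2 : ℝ) + ν ^ (-(2 : ℝ)))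
        + μ ^ (-(6 : ℝ)) * (ν ^ L + ν ^ (-L))
        + (ν ^ (L - 2) + ν ^ (-(L - 2))))
    (haP : aP = 2 * (L - 1) * μ ^ (-(3 * L)) * (ν ^ (2 : ℝ) + ν ^ (-(2 : ℝ)))
        + (4 - L) * μ ^ (-(6 : ℝ)) * (ν ^ L + ν ^ (-L))
        - (L + 2) * (ν ^ (L - 2) + ν ^ (-(L - 2))))
    (haM : aM = 2 * μ ^ (-(3 * L)) * (ν ^ (2 : ℝ) - ν ^ (-(2 : ℝ)))
        + L * μ ^ (-(6 : ℝ)) * (ν ^ L - ν ^ (-L))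
        + (L - 2) * (ν ^ (L - 2) - ν ^ (-(L - 2)))) :
    aP ^ 2 + aM ^ 2 < 4 * (L + 2) ^ 2 * D ^ 2
      ∧ ∀ φ : ℝ, 0 < (1 / Real.sqrt 3) *
          (2 * (L + 2) - (aP / D) * Real.cos φ + (aM / D) * Real.sin φ) := by
  have hM : 0 < μ ^ (-(3 * L)) := Real.rpow_pos_of_pos hμ _
  have hN : 0 < μ ^ (-(6 : ℝ)) := Real.rpow_pos_of_pos hμ _
  have h1 : 0 < ν ^ (2 : ℝ) := Real.rpow_pos_of_pos hν _
  have h2 : 0 < ν ^ (-(2 : ℝ)) := Real.rpow_pos_of_pos hν _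
  have h3 : 0 < ν ^ L := Real.rpow_pos_of_pos hν _
  have h4 : 0 < ν ^ (-L) := Real.rpow_pos_of_pos hν _
  have h5 : 0 < ν ^ (L - 2) := Real.rpow_pos_of_pos hν _
  have h6 : 0 < ν ^ (-(L - 2)) := Real.rpow_pos_of_pos hν _
  generalize μ ^ (-(3 * L)) = M at *
  generalize μ ^ (-(6 : ℝ)) = N at *
  generalize ν ^ (2 : ℝ) = a at *
  generalize ν ^ (-(2 : ℝ)) = b at *
  generalize ν ^ L = c at *
  generalize ν ^ (-L) = d at *
  generalize ν ^ (L - 2) = e at *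
  generalize ν ^ (-(L - 2)) = f at *
  have hDp : 0 < D := by rw [hD]; positivity
  have hK : 0 < 2 * (L + 2) := by linarith
  have key : aP ^ 2 + aM ^ 2 < (2 * (L + 2) * D) ^ 2 := by
    rcases (show 0 ≤ aP ^ 2 + aM ^ 2 by positivity).eq_or_lt with h0 | h0
    · rw [← h0]; positivity
    obtain ⟨r, hr, hr2⟩ : ∃ r : ℝ, 0 < r ∧ aP ^ 2 + aM ^ 2 = r ^ 2 :=
      ⟨√(aP ^ 2 + aM ^ 2), Real.sqrt_pos.2 h0, (Real.sq_sqrt h0.le).symm⟩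
    have t1 := aux_cs (2 * (L - 1)) 2 aP aM _ r (by nlinarith) hK hr hr2
    have t2 := aux_cs (2 * (L - 1)) (-2) aP aM _ r (by nlinarith) hK hr hr2
    have t3 := aux_cs (4 - L) L aP aM _ r (by nlinarith) hK hr hr2
    have t4 := aux_cs (4 - L) (-L) aP aM _ r (by nlinarith) hK hr hr2
    have t5 := aux_cs (-(L + 2)) (L - 2) aP aM _ r (by nlinarith) hK hr hr2
    have t6 := aux_cs (-(L + 2)) (-(L - 2)) aP aM _ r (by nlinarith) hK hr hr2
    have s1 := mul_lt_mul_of_pos_left t1 (mul_pos hM h1)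
    have s2 := mul_lt_mul_of_pos_left t2 (mul_pos hM h2)
    have s3 := mul_lt_mul_of_pos_left t3 (mul_pos hN h3)
    have s4 := mul_lt_mul_of_pos_left t4 (mul_pos hN h4)
    have s5 := mul_lt_mul_of_pos_left t5 h5
    have s6 := mul_lt_mul_of_pos_left t6 h6
    have e1 : aP ^ 2 + aM ^ 2 = aP * (2 * (L - 1) * M * (a + b) + (4 - L) * N * (c + d)
        - (L + 2) * (e + f)) + aM * (2 * M * (a - b) + L * N * (c - d)
        + (L - 2) * (e - f)) := by rw [← haP, ← haM]; ring
    have e2 : r * (2 * (L + 2) * D) = r * (2 * (L + 2) * (M * (a + b) + N * (c + d)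
        + (e + f))) := by rw [← hD]
    have e3 : r * r < r * (2 * (L + 2) * D) := by
      have : r * r = aP ^ 2 + aM ^ 2 := by rw [hr2]; ring
      rw [this, e1, e2]
      linarith
    have e4 := lt_of_mul_lt_mul_left e3 hr.le
    rw [hr2]
    exact pow_lt_pow_left₀ e4 hr.le two_ne_zero
  refine ⟨by linarith [key], fun φ => ?_⟩
  have t := aux_cs aP aM (Real.cos φ) (-Real.sin φ) (2 * (L + 2) * D) 1 key (by positivity)
    one_pos (by linarith [Real.sin_sq_add_cos_sq φ])
  apply mul_pos (by positivity)
  have : 2 * (L + 2) - (aP / D) * Real.cos φ + (aM / D) * Real.sin φ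
      = (2 * (L + 2) * D - aP * Real.cos φ + aM * Real.sin φ) / D := by
    field_simp
  rw [this]
  apply div_pos _ hDp
  linarith
end

section
/- Let k > 0 and let q⁰, π₀, π₊, π₋, W : ℝ → ℝ be differentiable functions satisfying, for all t, dq⁰/dt = −2π₀(t), dπ₀/dt = −2kW(t), and the constraint −π₀(t)² + (1/2)(π₊(t)² + π₋(t)²) + 2W(t) = 0. Then d/dt[π₀(t)e^{−kq⁰(t)/2}] = (k/2)e^{−kq⁰(t)/2}(π₊(t)² + π₋(t)²) ≥ 0; in particular, if π₀(t₀) > 0 for some t₀, then π₀(t) > 0 for all t ≥ t₀, so once the volume decreases it can never turn around (no bounce). -/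
/-- No bounce in a factorizing regime: if q̇⁰ = −2π₀, π̇₀ = −2kW with k > 0, and
the constraint −π₀² + (1/2)(π₊² + π₋²) + 2W = 0 holds, then
d/dt[π₀ e^{−kq⁰/2}] = (k/2)e^{−kq⁰/2}(π₊² + π₋²) ≥ 0; in particular once
π₀ > 0 (the volume decreases) it stays positive, so the volume can never
turn around. -/
theorem no_bounce_in_factorizing_regime
    (k : ℝ) (hk : 0 < k)
    (q0 p0 pp pm W : ℝ → ℝ)
    (hq0 : ∀ t, HasDerivAt q0 (-2 * p0 t) t)
    (hp0 : ∀ t, HasDerivAt p0 (-2 * k * W t) t)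
    (hconstraint : ∀ t, -(p0 t) ^ 2 + (1/2) * ((pp t) ^ 2 + (pm t) ^ 2)
        + 2 * W t = 0) :
    (∀ t, HasDerivAt (fun s => p0 s * Real.exp (-k * q0 s / 2))
        ((k / 2) * Real.exp (-k * q0 t / 2) * ((pp t) ^ 2 + (pm t) ^ 2)) t
      ∧ 0 ≤ (k / 2) * Real.exp (-k * q0 t / 2) * ((pp t) ^ 2 + (pm t) ^ 2))
    ∧ ∀ t₀, 0 < p0 t₀ → ∀ t, t₀ ≤ t → 0 < p0 t := by
  have key : ∀ t, HasDerivAt (fun s => p0 s * Real.exp (-k * q0 s / 2))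
        ((k / 2) * Real.exp (-k * q0 t / 2) * ((pp t) ^ 2 + (pm t) ^ 2)) t := by
    intro t
    have h := (hp0 t).fun_mul ((((hq0 t).const_mul (-k)).div_const 2).exp)
    refine h.congr_deriv ?_
    have hc := hconstraint t
    linear_combination (-k * Real.exp (-k * q0 t / 2)) * hc
  have nn : ∀ t, 0 ≤ (k / 2) * Real.exp (-k * q0 t / 2) * ((pp t) ^ 2 + (pm t) ^ 2) := by
    intro t
    positivity
  refine ⟨fun t => ⟨key t, nn t⟩, ?_⟩
  intro t₀ h0 t ht
  have hm : Monotone (fun s => p0 s * Real.exp (-k * q0 s / 2)) :=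
    monotone_of_hasDerivAt_nonneg key nn
  have h1 : p0 t₀ * Real.exp (-k * q0 t₀ / 2) ≤ p0 t * Real.exp (-k * q0 t / 2) := hm ht
  have h2 : 0 < p0 t₀ * Real.exp (-k * q0 t₀ / 2) := mul_pos h0 (Real.exp_pos _)
  exact pos_of_mul_pos_left (h2.trans_le h1) (Real.exp_pos _).le
end

section
/- Let σ ∈ ℝ², ρ > 0 with ‖σ‖² ≤ 2ρ², and v ∈ ℝ² with ‖v‖² > 1/2. Then σ·v + 2ρ‖v‖² > 0. Consequently, if v : I → ℝ² is differentiable on an interval I with v'(t) = (‖v(t)‖² − 1/2)(σ/2 + ρv(t)) and ‖v(t)‖² > 1/2 for all t ∈ I, then d/dt‖v(t)‖² = (‖v(t)‖² − 1/2)(σ·v(t) + 2ρ‖v(t)‖²) > 0, i.e. ‖v‖² is strictly increasing on I. -/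
open scoped RealInnerProductSpace

/-- In the effective (loop-modified) asymptotic regime with ‖σ‖² ≤ 2ρ², one has
σ·v + 2ρ‖v‖² > 0 whenever ‖v‖² > 1/2; consequently, along any solution of
v' = (‖v‖² − 1/2)(σ/2 + ρv) that stays in the region ‖v‖² > 1/2, the quantity
‖v‖² has derivative (‖v‖² − 1/2)(σ·v + 2ρ‖v‖²) > 0 and is strictly
increasing. -/
theorem effective_velocity_norm_increasing
    (σ : EuclideanSpace ℝ (Fin 2)) (ρ : ℝ) (hρ : 0 < ρ)
    (hσ : ‖σ‖ ^ 2 ≤ 2 * ρ ^ 2) :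
    (∀ v : EuclideanSpace ℝ (Fin 2), 1 / 2 < ‖v‖ ^ 2 →
        0 < ⟪σ, v⟫ + 2 * ρ * ‖v‖ ^ 2)
    ∧ ∀ (I : Set ℝ) (_ : I.OrdConnected) (v : ℝ → EuclideanSpace ℝ (Fin 2)),
        (∀ t ∈ I, HasDerivAt v
            ((‖v t‖ ^ 2 - 1 / 2) • ((1 / 2 : ℝ) • σ + ρ • v t)) t) →
        (∀ t ∈ I, 1 / 2 < ‖v t‖ ^ 2) →
        (∀ t ∈ I, HasDerivAt (fun s => ‖v s‖ ^ 2)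
            ((‖v t‖ ^ 2 - 1 / 2) * (⟪σ, v t⟫ + 2 * ρ * ‖v t‖ ^ 2)) t
          ∧ 0 < (‖v t‖ ^ 2 - 1 / 2) * (⟪σ, v t⟫ + 2 * ρ * ‖v t‖ ^ 2))
        ∧ StrictMonoOn (fun s => ‖v s‖ ^ 2) I := by
  have key : ∀ v : EuclideanSpace ℝ (Fin 2), 1 / 2 < ‖v‖ ^ 2 →
      0 < ⟪σ, v⟫ + 2 * ρ * ‖v‖ ^ 2 := by
    intro v hv
    have h := norm_add_sq_real σ ((2 * ρ) • v)
    rw [real_inner_smul_right, norm_smul, mul_pow, Real.norm_eq_abs, sq_abs] at h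
    have h0 : 0 ≤ ‖σ + (2 * ρ) • v‖ ^ 2 := by positivity
    have h1 : 0 < ρ ^ 2 * (‖v‖ ^ 2 - 1 / 2) := mul_pos (by positivity) (by linarith)
    have h2 : 0 < (4 * ρ) * (⟪σ, v⟫ + 2 * ρ * ‖v‖ ^ 2) := by nlinarith
    exact pos_of_mul_pos_right h2 (by positivity)
  refine ⟨key, fun I hI v hv hn => ?_⟩
  have hd : ∀ t ∈ I, HasDerivAt (fun s => ‖v s‖ ^ 2)
            ((‖v t‖ ^ 2 - 1 / 2) * (⟪σ, v t⟫ + 2 * ρ * ‖v t‖ ^ 2)) t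
          ∧ 0 < (‖v t‖ ^ 2 - 1 / 2) * (⟪σ, v t⟫ + 2 * ρ * ‖v t‖ ^ 2) := by
    intro t ht
    refine ⟨?_, mul_pos (by linarith [hn t ht]) (key _ (hn t ht))⟩
    convert (hv t ht).norm_sq using 1
    rw [real_inner_smul_right, inner_add_right, real_inner_smul_right, real_inner_smul_right,
      real_inner_self_eq_norm_sq, real_inner_comm]
    ring
  refine ⟨hd, strictMonoOn_of_deriv_pos hI.convex
    (fun t ht => (hd t ht).1.continuousAt.continuousWithinAt) (fun t ht => ?_)⟩
  rw [(hd t (interior_subset ht)).1.deriv]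
  exact (hd t (interior_subset ht)).2
end

section
/- Let σ ∈ ℝ², ρ > 0 and let v : I → ℝ² be differentiable on an interval I with v'(t) = (‖v(t)‖² − 1/2)(σ/2 + ρv(t)). Then the planar cross product N(t) := σ₁v₂(t) − σ₂v₁(t) satisfies the linear equation N'(t) = ρ(‖v(t)‖² − 1/2)N(t); in particular, if N(t₀) = 0 for some t₀ ∈ I then N ≡ 0 on I, and otherwise N never changes sign on I. -/
theorem aux_lin (N g : ℝ → ℝ) (a b : ℝ) (hab : a ≤ b) (hg : ContinuousOn g (Set.Icc a b))
    (hN : ∀ t ∈ Set.Icc a b, HasDerivAt N (g t * N t) t) : ∃ c : ℝ, 0 < c ∧ N b = c * N a := by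
  have hG : Continuous (Set.IccExtend hab ((Set.Icc a b).domRestrict g)) :=
    (continuousOn_iff_continuous_domRestrict.1 hg).Icc_extend'
  set G := Set.IccExtend hab ((Set.Icc a b).domRestrict g) with hGd
  have hA : ∀ t, HasDerivAt (fun x => ∫ s in a..x, G s) (G t) t := fun t =>
    intervalIntegral.integral_hasDerivAt_right (hG.intervalIntegrable _ _)
      hG.stronglyMeasurable.stronglyMeasurableAtFilter hG.continuousAt
  set A := fun x => ∫ s in a..x, G s with hAd
  have hM : ∀ t ∈ Set.Icc a b, HasDerivAt (fun x => N x * Real.exp (-A x)) 0 t := by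
    intro t ht
    have h := (hN t ht).mul (hA t).neg.exp
    have e : G t = g t := by rw [hGd, Set.IccExtend_of_mem _ _ ht]; rfl
    rw [e] at h
    refine HasDerivAt.congr_deriv h ?_
    try simp only [Pi.neg_apply]
    ring
  have hc := constant_of_has_deriv_right_zero
    (fun t ht => (hM t ht).continuousAt.continuousWithinAt)
    (fun t ht => (hM t (Set.Ico_subset_Icc_self ht)).hasDerivWithinAt) b ⟨hab, le_rfl⟩
  refine ⟨Real.exp (-A a) * Real.exp (A b), by positivity, ?_⟩
  have h2 : Real.exp (-A b) * Real.exp (A b) = 1 := by rw [← Real.exp_add]; simp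
  linear_combination Real.exp (A b) * hc - N b * h2

/-- Along a solution of v' = (‖v‖² − 1/2)(σ/2 + ρv) on an interval I, the planar
cross product N = σ₁v₂ − σ₂v₁ satisfies the linear equation
N' = ρ(‖v‖² − 1/2)N; in particular if N vanishes somewhere on I it vanishes
identically on I, and otherwise it never changes sign on I. -/
theorem cross_product_linear_equation
    (σ : EuclideanSpace ℝ (Fin 2)) (ρ : ℝ) (hρ : 0 < ρ)
    (I : Set ℝ) (hI : I.OrdConnected) (v : ℝ → EuclideanSpace ℝ (Fin 2))
    (hv : ∀ t ∈ I, HasDerivAt v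
        ((‖v t‖ ^ 2 - 1 / 2) • ((1 / 2 : ℝ) • σ + ρ • v t)) t)
    (N : ℝ → ℝ) (hN : ∀ t, N t = σ 0 * v t 1 - σ 1 * v t 0) :
    (∀ t ∈ I, HasDerivAt N (ρ * (‖v t‖ ^ 2 - 1 / 2) * N t) t)
    ∧ (∀ t₀ ∈ I, N t₀ = 0 → ∀ t ∈ I, N t = 0)
    ∧ (∀ t₀ ∈ I, N t₀ ≠ 0 → ∀ t ∈ I, 0 < N t * N t₀) := by
  have h1 : ∀ t ∈ I, HasDerivAt N (ρ * (‖v t‖ ^ 2 - 1 / 2) * N t) t := by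
    intro t ht
    have h := hv t ht
    have hi : ∀ i : Fin 2, HasDerivAt (fun s => v s i)
        (((‖v t‖ ^ 2 - 1 / 2) • ((1 / 2 : ℝ) • σ + ρ • v t)) i) t := fun i =>
      (EuclideanSpace.proj (𝕜 := ℝ) i).hasFDerivAt.comp_hasDerivAt t h
    have h3 := ((hi 1).const_mul (σ 0)).sub ((hi 0).const_mul (σ 1))
    have e : N = fun t => σ 0 * v t 1 - σ 1 * v t 0 := funext hN
    rw [e]
    refine HasDerivAt.congr_deriv h3 ?_
    simp only [PiLp.smul_apply, PiLp.add_apply, smul_eq_mul]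
    ring
  have hg : ContinuousOn (fun t => ρ * (‖v t‖ ^ 2 - 1 / 2)) I := by
    have : ContinuousOn v I := fun t ht => (hv t ht).continuousAt.continuousWithinAt
    fun_prop
  have key : ∀ t₀ ∈ I, ∀ t ∈ I, ∃ c : ℝ, 0 < c ∧ N t = c * N t₀ := by
    intro t₀ h0 t ht
    rcases le_total t₀ t with h | h
    · have hs := hI.out h0 ht
      exact aux_lin N _ t₀ t h (hg.mono hs) (fun x hx => h1 x (hs hx))
    · have hs := hI.out ht h0
      obtain ⟨c, hc, e⟩ := aux_lin N _ t t₀ h (hg.mono hs) (fun x hx => h1 x (hs hx))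
      refine ⟨c⁻¹, by positivity, ?_⟩
      rw [e]
      field_simp
  refine ⟨h1, ?_, ?_⟩
  · intro t₀ h0 hz t ht
    obtain ⟨c, hc, e⟩ := key t₀ h0 t ht
    rw [e, hz, mul_zero]
  · intro t₀ h0 hz t ht
    obtain ⟨c, hc, e⟩ := key t₀ h0 t ht
    rw [e, mul_assoc]
    exact mul_pos hc (mul_self_pos.2 hz)
end

section
/- Let σ ∈ ℝ², ρ > 0 and let v : I → ℝ² be differentiable on an interval I with v'(t) = (‖v(t)‖² − 1/2)(σ/2 + ρv(t)). Then for all s, t ∈ I, (σ×v(s))·(σ·v(t) + ‖σ‖²/(2ρ)) = (σ×v(t))·(σ·v(s) + ‖σ‖²/(2ρ)). Equivalently, the orbit in the velocity plane is the straight line v_⊥ = A(v_∥ + ‖σ‖/(2ρ)) through the isolated fixed point, with A constant along the solution. -/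
open scoped RealInnerProductSpace

/-- The orbit of the asymptotic velocity dynamics in the velocity plane is a
straight line through the isolated fixed point: along any solution of
v' = (‖v‖² − 1/2)(σ/2 + ρv) on an interval I, for all s, t ∈ I one has
(σ×v(s))·(σ·v(t) + ‖σ‖²/(2ρ)) = (σ×v(t))·(σ·v(s) + ‖σ‖²/(2ρ)), i.e. the slope
A of the line v_⊥ = A(v_∥ + ‖σ‖/(2ρ)) is constant along the solution. -/
theorem orbit_is_straight_line
    (σ : EuclideanSpace ℝ (Fin 2)) (ρ : ℝ) (hρ : 0 < ρ)
    (I : Set ℝ) (hI : I.OrdConnected) (v : ℝ → EuclideanSpace ℝ (Fin 2))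
    (hv : ∀ t ∈ I, HasDerivAt v
        ((‖v t‖ ^ 2 - 1 / 2) • ((1 / 2 : ℝ) • σ + ρ • v t)) t) :
    ∀ s ∈ I, ∀ t ∈ I,
      (σ 0 * v s 1 - σ 1 * v s 0) * (⟪σ, v t⟫ + ‖σ‖ ^ 2 / (2 * ρ))
        = (σ 0 * v t 1 - σ 1 * v t 0) * (⟪σ, v s⟫ + ‖σ‖ ^ 2 / (2 * ρ)) := by
  intro s hs t ht
  wlog hst : s ≤ t generalizing s t
  · exact (this t ht s hs (le_of_not_ge hst)).symm
  have hsub : Set.Icc s t ⊆ I := hI.out hs ht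
  have hc : ContinuousOn v (Set.Icc s t) := fun u hu =>
    (hv u (hsub hu)).continuousAt.continuousWithinAt
  have hg : ContinuousOn (fun u => (‖v u‖ ^ 2 - 1 / 2) * ρ) (Set.Icc s t) := by fun_prop
  obtain ⟨K, hK⟩ := isCompact_Icc.exists_bound_of_continuousOn hg
  have hin : ∀ w : EuclideanSpace ℝ (Fin 2), ⟪σ, w⟫ = σ 0 * w 0 + σ 1 * w 1 := by
    intro w
    simp [PiLp.inner_apply, Fin.sum_univ_two]
    ring
  have hn : ‖σ‖ ^ 2 = σ 0 ^ 2 + σ 1 ^ 2 := by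
    simp [EuclideanSpace.norm_sq_eq, Fin.sum_univ_two]
  set D : ℝ → ℝ := fun u =>
    (σ 0 * v s 1 - σ 1 * v s 0) * (σ 0 * v u 0 + σ 1 * v u 1 + ‖σ‖ ^ 2 / (2 * ρ))
      - (σ 0 * v u 1 - σ 1 * v u 0) * (σ 0 * v s 0 + σ 1 * v s 1 + ‖σ‖ ^ 2 / (2 * ρ)) with hD
  have hd : ∀ u ∈ I, HasDerivAt D ((‖v u‖ ^ 2 - 1 / 2) * ρ * D u) u := by
    intro u hu
    have h := hv u hu
    have hi : ∀ i, HasDerivAt (fun x => v x i)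
        ((‖v u‖ ^ 2 - 1 / 2) * (1 / 2 * σ i + ρ * v u i)) u := by
      intro i
      have := (EuclideanSpace.proj (𝕜 := ℝ) i).hasFDerivAt.comp_hasDerivAt u h
      simpa [Function.comp_def, mul_add] using this
    have h0 := hi 0
    have h1 := hi 1
    have := ((((h0.const_mul (σ 0)).add (h1.const_mul (σ 1))).add_const
      (‖σ‖ ^ 2 / (2 * ρ))).const_mul (σ 0 * v s 1 - σ 1 * v s 0)).sub
      (((h1.const_mul (σ 0)).sub (h0.const_mul (σ 1))).mul_const
        (σ 0 * v s 0 + σ 1 * v s 1 + ‖σ‖ ^ 2 / (2 * ρ)))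
    refine HasDerivAt.congr_deriv this ?_
    simp only [hD]
    rw [hn]
    field_simp
    ring
  have hb := norm_le_gronwallBound_of_norm_deriv_right_le (f := D)
    (f' := fun u => (‖v u‖ ^ 2 - 1 / 2) * ρ * D u) (δ := 0) (K := K) (ε := 0) (a := s) (b := t)
    (fun u hu => (hd u (hsub hu)).continuousAt.continuousWithinAt)
    (fun u hu => (hd u (hsub ⟨hu.1, hu.2.le⟩)).hasDerivWithinAt)
    (by simp only [hD]; rw [norm_le_zero_iff]; ring)
    (fun u hu => by
      rw [norm_mul, add_zero]
      exact mul_le_mul_of_nonneg_right (hK u ⟨hu.1, hu.2.le⟩) (norm_nonneg _))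
    t ⟨hst, le_rfl⟩
  have h0 : D t = 0 := by simpa [gronwallBound_ε0] using hb
  rw [hin, hin]
  exact sub_eq_zero.mp h0
end

section
/- Let ρ > 0, σ ∈ ℝ² and v* ∈ ℝ² with ‖v*‖² = 1/2, and let M : ℝ² → ℝ² be the linear map M(u) = (v*·u)(σ + 2ρv*). Then M has determinant 0 and trace equal to σ·v* + ρ. If moreover ‖σ‖² < 2ρ², then σ·v* + ρ > 0 for every such v*, so every Kasner fixed point on the circle ‖v‖² = 1/2 is linearly stable under the backward effective evolution, with no restriction on the asymptotic direction. -/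
open scoped RealInnerProductSpace

/-- Linearization of the effective velocity dynamics at a Kasner fixed point
v* with ‖v*‖² = 1/2: the linear map M(u) = (v*·u)(σ + 2ρv*) has determinant 0
and trace σ·v* + ρ; and if ‖σ‖² < 2ρ², then σ·v* + ρ > 0 for every v* on the
Kasner circle, so every Kasner fixed point is linearly stable under the
backward effective evolution, with no restriction on the asymptotic
direction. -/
theorem kasner_fixed_points_all_stable
    (σ : EuclideanSpace ℝ (Fin 2)) (ρ : ℝ) (hρ : 0 < ρ) :
    (∀ (vs : EuclideanSpace ℝ (Fin 2)), ‖vs‖ ^ 2 = 1 / 2 →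
      ∀ (M : EuclideanSpace ℝ (Fin 2) →ₗ[ℝ] EuclideanSpace ℝ (Fin 2)),
        (∀ u, M u = ⟪vs, u⟫ • (σ + (2 * ρ) • vs)) →
          LinearMap.det M = 0
          ∧ LinearMap.trace ℝ _ M = ⟪σ, vs⟫ + ρ)
    ∧ (‖σ‖ ^ 2 < 2 * ρ ^ 2 →
        ∀ (vs : EuclideanSpace ℝ (Fin 2)), ‖vs‖ ^ 2 = 1 / 2 →
          0 < ⟪σ, vs⟫ + ρ) := by
  constructor
  · intro vs hvs M hM
    rw [EuclideanSpace.real_norm_sq_eq, Fin.sum_univ_two] at hvs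
    let b := (EuclideanSpace.basisFun (Fin 2) ℝ).toBasis
    have key : ∀ i j, LinearMap.toMatrix b b M i j = vs j * (σ i + 2 * ρ * vs i) := by
      intro i j
      rw [LinearMap.toMatrix_apply, hM]
      simp [b, EuclideanSpace.inner_single_right]
      ring
    constructor
    · rw [← LinearMap.det_toMatrix b, Matrix.det_fin_two]
      simp only [key]
      ring
    · rw [LinearMap.trace_eq_matrix_trace ℝ b, Matrix.trace_fin_two]
      simp only [key]
      simp only [PiLp.inner_apply, Fin.sum_univ_two, RCLike.inner_apply, conj_trivial]
      linear_combination 2 * ρ * hvs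
  · intro h vs hvs
    have h1 := abs_real_inner_le_norm σ vs
    have h2 : ‖σ‖ * ‖vs‖ < ρ := by
      apply lt_of_pow_lt_pow_left₀ 2 hρ.le
      rw [mul_pow, hvs]
      linarith
    have h3 := neg_abs_le (⟪σ, vs⟫)
    linarith
end

section
/- Let ρ > 0 and σ ∈ ℝ² with ‖σ‖² = 8ρ². Then: (i) the isolated fixed point v* = −σ/(2ρ) of the velocity ODE satisfies ‖v*‖² = 2, so it is inaccessible in the classically allowed region ‖v‖² < 1/2; (ii) for any v* ∈ ℝ² with ‖v*‖² = 1/2, the linear stability condition σ·v* + ρ > 0 is equivalent to cos φ* > −1/2, where cos φ* = σ·v*/(‖σ‖·‖v*‖), so in the classical case the asymptotic Kasner directions are restricted to |φ*| < 2π/3. -/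
open scoped RealInnerProductSpace

/-- The classical case ‖σ‖² = 8ρ²: (i) the isolated fixed point v* = −σ/(2ρ)
has ‖v*‖² = 2, so it is inaccessible in the classically allowed region
‖v‖² < 1/2; (ii) for any v* with ‖v*‖² = 1/2, the stability condition
σ·v* + ρ > 0 is equivalent to cos φ* = σ·v*/(‖σ‖·‖v*‖) > −1/2, restricting the
asymptotic Kasner directions to |φ*| < 2π/3. -/
theorem classical_case_restricted_stability
    (σ : EuclideanSpace ℝ (Fin 2)) (ρ : ℝ) (hρ : 0 < ρ)
    (hσ : ‖σ‖ ^ 2 = 8 * ρ ^ 2) :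
    ‖(-(2 * ρ)⁻¹ : ℝ) • σ‖ ^ 2 = 2
    ∧ ∀ (vs : EuclideanSpace ℝ (Fin 2)), ‖vs‖ ^ 2 = 1 / 2 →
        (0 < ⟪σ, vs⟫ + ρ ↔ -(1 / 2) < ⟪σ, vs⟫ / (‖σ‖ * ‖vs‖)) := by
  constructor
  · rw [norm_smul, mul_pow, hσ, Real.norm_eq_abs, sq_abs]
    field_simp
    norm_num
  · intro vs hv
    have h : ‖σ‖ * ‖vs‖ = 2 * ρ := by
      have h2 : (‖σ‖ * ‖vs‖) ^ 2 = (2 * ρ) ^ 2 := by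
        rw [mul_pow, hσ, hv]; ring
      exact (sq_eq_sq₀ (by positivity) (by positivity)).mp h2
    rw [h, lt_div_iff₀ (by positivity)]
    constructor <;> intro h <;> linarith
end

section
/- Let σ ∈ ℝ² and ρ > 0 with ‖σ‖² ≤ 2ρ², and let v : (−∞, t₀] → ℝ² be differentiable with v'(t) = (‖v(t)‖² − 1/2)(σ/2 + ρv(t)) and ‖v(t)‖² > 1/2 for all t ≤ t₀. Then v(t) converges as t → −∞ to a limit v* ∈ ℝ² with ‖v*‖² = 1/2. In other words, every trajectory of the effective asymptotic Bianchi IX dynamics approaches a Kasner velocity as the volume goes to zero. -/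
/-- Every trajectory of the effective asymptotic Bianchi IX dynamics approaches
a Kasner velocity as the volume goes to zero: if ‖σ‖² ≤ 2ρ² and v solves
v' = (‖v‖² − 1/2)(σ/2 + ρv) with ‖v(t)‖² > 1/2 for all t ≤ t₀, then v(t)
converges as t → −∞ to some v* with ‖v*‖² = 1/2. -/
theorem effective_trajectory_tends_to_kasner
    (σ : EuclideanSpace ℝ (Fin 2)) (ρ : ℝ) (hρ : 0 < ρ)
    (hσ : ‖σ‖ ^ 2 ≤ 2 * ρ ^ 2)
    (t₀ : ℝ) (v : ℝ → EuclideanSpace ℝ (Fin 2))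
    (hv : ∀ t ≤ t₀, HasDerivAt v
        ((‖v t‖ ^ 2 - 1 / 2) • ((1 / 2 : ℝ) • σ + ρ • v t)) t)
    (hbound : ∀ t ≤ t₀, 1 / 2 < ‖v t‖ ^ 2) :
    ∃ vs : EuclideanSpace ℝ (Fin 2), ‖vs‖ ^ 2 = 1 / 2
      ∧ Filter.Tendsto v Filter.atBot (nhds vs) := by
  set c : EuclideanSpace ℝ (Fin 2) := (1 / (2 * ρ)) • σ with hc
  have hcn : ‖c‖ ^ 2 ≤ 1 / 2 := by
    rw [hc, norm_smul, mul_pow, Real.norm_eq_abs, sq_abs, div_pow, div_mul_eq_mul_div,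
      div_le_iff₀ (by positivity)]
    linarith
  set w : ℝ → EuclideanSpace ℝ (Fin 2) := fun t => v t + c with hw
  set f : ℝ → ℝ := fun t => ‖v t‖ ^ 2 - 1 / 2 with hf
  have hfpos : ∀ t ≤ t₀, 0 < f t := fun t ht => by
    have := hbound t ht
    simp only [hf]; linarith
  have hwd : ∀ t ≤ t₀, HasDerivAt w ((ρ * f t) • w t) t := by
    intro t ht
    have h := (hv t ht).add_const c
    have e : (ρ * f t) • w t = (‖v t‖ ^ 2 - 1 / 2) • ((1 / 2 : ℝ) • σ + ρ • v t) := by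
      have e1 : (1 / 2 : ℝ) • σ = ρ • c := by
        rw [hc, smul_smul]; congr 1; field_simp
      rw [e1, ← smul_add, smul_smul, add_comm c, mul_comm ρ]
    rw [e]
    exact h
  have hw0 : ∀ t ≤ t₀, 0 < ‖w t‖ := by
    intro t ht
    rw [norm_pos_iff]
    intro h0
    have h1 : v t = -c := eq_neg_of_add_eq_zero_left h0
    have h2 := hbound t ht
    rw [h1, norm_neg] at h2
    linarith
  set r : ℝ → ℝ := fun t => ‖w t‖ with hr
  have hrd : ∀ t ≤ t₀, HasDerivAt r (ρ * f t * r t) t := by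
    intro t ht
    have hp := hw0 t ht
    have h := ((hwd t ht).norm_sq).sqrt (by positivity)
    have e : (fun y => √(‖w y‖ ^ 2)) = r := by
      funext y; simp [hr, Real.sqrt_sq]
    rw [e, Real.sqrt_sq hp.le] at h
    convert h using 1
    rw [real_inner_smul_right, real_inner_self_eq_norm_sq]
    simp only [hr]
    field_simp
  have hconst : ∀ t ≤ t₀, (r t)⁻¹ • w t = (r t₀)⁻¹ • w t₀ := by
    intro t ht
    have hd : ∀ s ≤ t₀, HasDerivAt (fun s => (r s)⁻¹ • w s) 0 s := by
      intro s hs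
      have hp : r s ≠ 0 := (hw0 s hs).ne'
      have h := ((hrd s hs).fun_inv hp).fun_smul (hwd s hs)
      have e : (r s)⁻¹ * (ρ * f s) + (-(ρ * f s * r s) / r s ^ 2) = 0 := by
        field_simp
        ring
      rw [smul_smul, ← add_smul, e, zero_smul] at h
      exact h
    exact (constant_of_has_deriv_right_zero (a := t) (b := t₀)
      (fun s hs => (hd s hs.2).continuousAt.continuousWithinAt)
      (fun s hs => (hd s hs.2.le).hasDerivWithinAt) t₀ ⟨ht, le_rfl⟩).symm
  set u := (r t₀)⁻¹ • w t₀ with hu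
  have hvr : ∀ t ≤ t₀, v t = r t • u - c := by
    intro t ht
    have hp : r t ≠ 0 := (hw0 t ht).ne'
    rw [← hconst t ht, smul_smul, mul_inv_cancel₀ hp, one_smul]
    simp [hw]
  have hmono : MonotoneOn r (Set.Iic t₀) := by
    apply monotoneOn_of_deriv_nonneg (convex_Iic t₀)
      (fun s hs => (hrd s hs).continuousAt.continuousWithinAt)
    · intro s hs
      rw [interior_Iic] at hs
      exact (hrd s (le_of_lt hs)).differentiableAt.differentiableWithinAt
    · intro s hs
      rw [interior_Iic] at hs
      have hs' : s ≤ t₀ := le_of_lt hs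
      rw [(hrd s hs').deriv]
      exact (mul_pos (mul_pos hρ (hfpos s hs')) (hw0 s hs')).le
  have hev : ∀ᶠ t in Filter.atBot, t ≤ t₀ := Filter.eventually_le_atBot t₀
  obtain ⟨l, hl⟩ : ∃ l, Filter.Tendsto r Filter.atBot (nhds l) := by
    have hm : Monotone (fun t => r (min t t₀)) := fun a b hab =>
      hmono (Set.mem_Iic.2 (min_le_right _ _)) (Set.mem_Iic.2 (min_le_right _ _)) (min_le_min_right _ hab)
    have hb : BddBelow (Set.range (fun t => r (min t t₀))) :=
      ⟨0, by rintro _ ⟨t, rfl⟩; exact norm_nonneg _⟩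
    refine ⟨_, (tendsto_atBot_ciInf hm hb).congr' ?_⟩
    filter_upwards [hev] with t ht
    rw [min_eq_left ht]
  have hvl : Filter.Tendsto v Filter.atBot (nhds (l • u - c)) := by
    refine ((hl.smul_const u).sub_const c).congr' ?_
    filter_upwards [hev] with t ht
    exact (hvr t ht).symm
  refine ⟨l • u - c, ?_, hvl⟩
  have hfl : Filter.Tendsto f Filter.atBot (nhds (‖l • u - c‖ ^ 2 - 1 / 2)) :=
    (hvl.norm.pow 2).sub_const _
  have hl0 : 0 ≤ l := ge_of_tendsto' hl (fun t => norm_nonneg _)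
  have hf0 : 0 ≤ ‖l • u - c‖ ^ 2 - 1 / 2 := by
    refine ge_of_tendsto hfl ?_
    filter_upwards [hev] with t ht using (hfpos t ht).le
  rcases hl0.eq_or_lt with h0 | hlpos
  · rw [← h0, zero_smul, zero_sub, norm_neg] at hf0 ⊢
    linarith
  rcases hf0.eq_or_lt with h0 | hfp
  · linarith
  exfalso
  set F := ‖l • u - c‖ ^ 2 - 1 / 2 with hF
  have hL : 0 < ρ * F * l := by positivity
  have hder : Filter.Tendsto (fun t => ρ * f t * r t) Filter.atBot (nhds (ρ * F * l)) :=
    (hfl.const_mul ρ).mul hl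
  obtain ⟨T, hT⟩ := Filter.eventually_atBot.1
    ((hder.eventually (lt_mem_nhds (half_lt_self hL))).and hev)
  set D := ρ * F * l / 2 with hD
  have hDp : 0 < D := half_pos hL
  have hrT : 0 < r T := hw0 T (hT T le_rfl).2
  set s := T - r T / D with hs
  have hsT : s < T := by have : 0 < r T / D := by positivity
                         linarith
  have hrs : 0 < r s := hw0 s (hT s hsT.le).2
  obtain ⟨x, hx, hxe⟩ := exists_hasDerivAt_eq_slope r (fun t => ρ * f t * r t) hsT
    (fun y hy => (hrd y (hT y hy.2).2).continuousAt.continuousWithinAt)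
    (fun y hy => hrd y (hT y hy.2.le).2)
  have h1 := (hT x hx.2.le).1
  rw [hxe, lt_div_iff₀ (by linarith)] at h1
  have h2 : D * (T - s) = r T := by rw [hs]; field_simp; ring
  linarith
end

section
/- Let σ ∈ ℝ² and ρ > 0 with ‖σ‖² = 8ρ², and let v : (−∞, t₀] → ℝ² be differentiable with v'(t) = (‖v(t)‖² − 1/2)(σ/2 + ρv(t)) and ‖v(t)‖² < 1/2 for all t ≤ t₀. Then v(t) converges as t → −∞ to a limit v* ∈ ℝ² with ‖v*‖² = 1/2. In other words, any trajectory of the classical asymptotic dynamics that remains in one asymptotic angular region for all backward time approaches a Kasner velocity. -/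
lemma aux_anti (g g' : ℝ → ℝ) (T : ℝ) (hg : ∀ t ≤ T, HasDerivAt g (g' t) t)
    (hn : ∀ t ≤ T, g' t ≤ 0) : AntitoneOn g (Set.Iic T) := by
  apply antitoneOn_of_deriv_nonpos (convex_Iic T)
  · intro t ht
    exact (hg t ht).continuousAt.continuousWithinAt
  · intro t ht
    exact (hg t (Set.mem_Iic.1 (interior_subset ht))).differentiableAt.differentiableWithinAt
  · intro t ht
    rw [(hg t (Set.mem_Iic.1 (interior_subset ht))).deriv]
    exact hn t (Set.mem_Iic.1 (interior_subset ht))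

/-- Classical asymptotic dynamics: if ‖σ‖² = 8ρ² and v solves
v' = (‖v‖² − 1/2)(σ/2 + ρv) with ‖v(t)‖² < 1/2 for all t ≤ t₀ (i.e. the
trajectory remains in one asymptotic angular region for all backward time),
then v(t) converges as t → −∞ to some v* with ‖v*‖² = 1/2. -/
theorem classical_trajectory_tends_to_kasner
    (σ : EuclideanSpace ℝ (Fin 2)) (ρ : ℝ) (hρ : 0 < ρ)
    (hσ : ‖σ‖ ^ 2 = 8 * ρ ^ 2)
    (t₀ : ℝ) (v : ℝ → EuclideanSpace ℝ (Fin 2))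
    (hv : ∀ t ≤ t₀, HasDerivAt v
        ((‖v t‖ ^ 2 - 1 / 2) • ((1 / 2 : ℝ) • σ + ρ • v t)) t)
    (hbound : ∀ t ≤ t₀, ‖v t‖ ^ 2 < 1 / 2) :
    ∃ vs : EuclideanSpace ℝ (Fin 2), ‖vs‖ ^ 2 = 1 / 2
      ∧ Filter.Tendsto v Filter.atBot (nhds vs) := by
  have hσ3 : ‖σ‖ ≤ 3 * ρ := by
    apply le_of_sq_le_sq _ (by positivity)
    nlinarith
  have hv1 : ∀ t ≤ t₀, ‖v t‖ ≤ 1 := by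
    intro t ht
    have := hbound t ht
    nlinarith [norm_nonneg (v t)]
  have hin : ∀ t ≤ t₀, |inner ℝ σ (v t)| ≤ 2 * ρ := by
    intro t ht
    refine (abs_real_inner_le_norm σ (v t)).trans ?_
    apply le_of_sq_le_sq _ (by positivity)
    rw [mul_pow, hσ]
    nlinarith [hbound t ht, sq_nonneg ρ, mul_pos hρ hρ]
  set f : ℝ → ℝ := fun t => inner ℝ σ (v t) with hf
  have hfd : ∀ t ≤ t₀, HasDerivAt f
      ((‖v t‖ ^ 2 - 1 / 2) * (4 * ρ ^ 2 + ρ * f t)) t := by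
    intro t ht
    have h := (hasDerivAt_const t σ).inner ℝ (hv t ht)
    refine h.congr_deriv ?_
    simp only [inner_zero_left, inner_smul_right, inner_add_right, real_inner_self_eq_norm_sq, hσ, hf]
    ring
  have hfle : ∀ t ≤ t₀, (‖v t‖ ^ 2 - 1 / 2) * (4 * ρ ^ 2 + ρ * f t)
      ≤ (‖v t‖ ^ 2 - 1 / 2) * (2 * ρ ^ 2) := by
    intro t ht
    have h1 := (abs_le.1 (hin t ht)).1
    have h2 := hbound t ht
    apply mul_le_mul_of_nonpos_left _ (by linarith)
    have : -(2 * ρ) ≤ f t := h1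
    nlinarith
  have hanti : AntitoneOn f (Set.Iic t₀) := by
    apply aux_anti f _ t₀ hfd
    intro t ht
    refine (hfle t ht).trans ?_
    have h2 := hbound t ht
    nlinarith [mul_pos hρ hρ]
  have hcmp : ∀ s t, s ≤ t → t ≤ t₀ → ‖v t - v s‖ ≤ 2 / ρ * (f s - f t) := by
    intro s t hst ht
    have hmem : ∀ x ∈ Set.Icc s t, x ≤ t₀ := fun x hx => hx.2.trans ht
    refine image_norm_le_of_norm_deriv_right_le_deriv_boundary'
      (f := fun x => v x - v s) (f' := fun x => (‖v x‖ ^ 2 - 1 / 2) • ((1 / 2 : ℝ) • σ + ρ • v x))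
      (B := fun x => 2 / ρ * (f s - f x))
      (B' := fun x => 2 / ρ * (- ((‖v x‖ ^ 2 - 1 / 2) * (4 * ρ ^ 2 + ρ * f x))))
      (a := s) (b := t) ?_ ?_ ?_ ?_ ?_ ?_ ⟨hst, le_rfl⟩
    · intro x hx
      exact ((hv x (hmem x hx)).sub_const _).continuousAt.continuousWithinAt
    · intro x hx
      exact ((hv x (hmem x ⟨hx.1, hx.2.le⟩)).sub_const _).hasDerivWithinAt
    · simp
    · intro x hx
      exact (((hfd x (hmem x hx)).const_sub _).const_mul _).continuousAt.continuousWithinAt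
    · intro x hx
      exact (((hfd x (hmem x ⟨hx.1, hx.2.le⟩)).const_sub _).const_mul _).hasDerivWithinAt
    · intro x hx
      have hx' := hmem x ⟨hx.1, hx.2.le⟩
      have hb := hbound x hx'
      have hw : ‖(1 / 2 : ℝ) • σ + ρ • v x‖ ≤ 4 * ρ := by
        refine (norm_add_le _ _).trans ?_
        rw [norm_smul, norm_smul, Real.norm_of_nonneg hρ.le, Real.norm_of_nonneg (by norm_num)]
        nlinarith [hv1 x hx']
      rw [norm_smul, Real.norm_of_nonpos (by linarith)]
      calc -(‖v x‖ ^ 2 - 1 / 2) * ‖(1 / 2 : ℝ) • σ + ρ • v x‖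
          ≤ -(‖v x‖ ^ 2 - 1 / 2) * (4 * ρ) := mul_le_mul_of_nonneg_left hw (by linarith)
        _ = 2 / ρ * (-((‖v x‖ ^ 2 - 1 / 2) * (2 * ρ ^ 2))) := by field_simp; ring
        _ ≤ _ := by
          apply mul_le_mul_of_nonneg_left _ (by positivity)
          linarith [hfle x hx']
  have hm : ∀ s : ℝ, t₀ - max s 0 ≤ t₀ := fun s => by linarith [le_max_right s 0]
  set F : ℝ → ℝ := fun s => f (t₀ - max s 0) with hF
  have hmono : Monotone F := by
    intro a b hab
    apply hanti (hm b) (hm a)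
    have := max_le_max_right 0 hab
    linarith
  have hFc : CauchySeq F := by
    have hbd : BddAbove (Set.range F) := by
      refine ⟨2 * ρ, ?_⟩
      rintro _ ⟨s, rfl⟩
      exact (abs_le.1 (hin _ (hm s))).2
    exact (tendsto_atTop_ciSup hmono hbd).cauchySeq
  have hVc : CauchySeq (fun s => v (t₀ - max s 0)) := by
    have key : ∀ a b : ℝ, dist (v (t₀ - max a 0)) (v (t₀ - max b 0)) ≤ 2 / ρ * dist (F a) (F b) := by
      intro a b
      wlog hab : a ≤ b generalizing a b
      · rw [dist_comm, dist_comm (F a)]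
        exact this b a (le_of_not_ge hab)
      rw [dist_eq_norm, dist_comm, Real.dist_eq]
      have h0 := max_le_max_right 0 hab
      refine (hcmp _ _ (by linarith) (hm a)).trans ?_
      exact mul_le_mul_of_nonneg_left (le_abs_self _) (by positivity)
    rw [Metric.cauchySeq_iff] at hFc ⊢
    intro ε hε
    obtain ⟨N, hN⟩ := hFc (ε * ρ / 2) (by positivity)
    refine ⟨N, fun m hm n hn => (key m n).trans_lt ?_⟩
    calc _ < 2 / ρ * (ε * ρ / 2) := mul_lt_mul_of_pos_left (hN m hm n hn) (by positivity)
      _ = ε := by field_simp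
  obtain ⟨vs, hvs⟩ := cauchySeq_tendsto_of_complete hVc
  have hlim : Filter.Tendsto v Filter.atBot (nhds vs) := by
    have h1 : Filter.Tendsto (fun t : ℝ => t₀ - t) Filter.atBot Filter.atTop :=
      Filter.tendsto_atTop_add_const_left _ _ Filter.tendsto_neg_atBot_atTop
    refine (hvs.comp h1).congr' ?_
    filter_upwards [Filter.eventually_le_atBot t₀] with t ht
    simp [max_eq_left (sub_nonneg.2 ht)]
  have hsq : Filter.Tendsto (fun t => ‖v t‖ ^ 2) Filter.atBot (nhds (‖vs‖ ^ 2)) := hlim.norm.pow 2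
  refine ⟨vs, ?_, hlim⟩
  have hle : ‖vs‖ ^ 2 ≤ 1 / 2 := by
    apply le_of_tendsto hsq
    filter_upwards [Filter.eventually_le_atBot t₀] with t ht
    exact (hbound t ht).le
  by_contra hne
  have hlt : ‖vs‖ ^ 2 < 1 / 2 := lt_of_le_of_ne hle hne
  obtain ⟨r, hr1, hr2⟩ := exists_between hlt
  obtain ⟨T, hT⟩ := Filter.eventually_atBot.1 (hsq.eventually_lt_const hr1)
  set T' := min T t₀
  set c := (1 / 2 - r) * (2 * ρ ^ 2) with hc
  have hcpos : 0 < c := mul_pos (by linarith) (by positivity)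
  have han : AntitoneOn (fun t => f t + c * t) (Set.Iic T') := by
    apply aux_anti _ _ T' (fun t ht =>
      (hfd t (ht.trans (min_le_right _ _))).add ((hasDerivAt_id t).const_mul c))
    intro t ht
    have h1 := hfle t (ht.trans (min_le_right _ _))
    have h2 := hT t (ht.trans (min_le_left _ _))
    have h3 : (‖v t‖ ^ 2 - 1 / 2) * (2 * ρ ^ 2) ≤ (r - 1 / 2) * (2 * ρ ^ 2) :=
      mul_le_mul_of_nonneg_right (by linarith) (by positivity)
    have h4 : c = -((r - 1 / 2) * (2 * ρ ^ 2)) := by rw [hc]; ring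
    linarith
  have hd : 0 < 5 * ρ / c := by positivity
  have h := han (show T' - 5 * ρ / c ∈ Set.Iic T' from by simp only [Set.mem_Iic]; linarith) (show T' ∈ Set.Iic T' from Set.mem_Iic.2 le_rfl) (by linarith)
  have e : c * (T' - 5 * ρ / c) = c * T' - 5 * ρ := by field_simp
  have h1 := (abs_le.1 (hin T' (min_le_right _ _))).1
  have h2 := (abs_le.1 (hin (T' - 5 * ρ / c) (by linarith [min_le_right T t₀]))).2
  have h' : f T' + c * T' ≤ f (T' - 5 * ρ / c) + c * (T' - 5 * ρ / c) := h
  have h1' : -(2 * ρ) ≤ f T' := h1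
  have h2' : f (T' - 5 * ρ / c) ≤ 2 * ρ := h2
  linarith
end

section
/- Let 0 < l < 1 and L = (2 − l)/(1 − l). With σ₁ = (4/√6, 0), σ₂ = (−2/√6, √2) and ρ₀ = 2/√3, set σ_a = L·σ₁ + 2·σ₂ and ρ_a = (L + 2)·ρ₀. Then ‖σ_a‖²/(2ρ_a²) = (3l² − 6l + 4)/(4 − 3l)², and this quantity is strictly less than 1 for every 0 < l < 1 (tending to 1 only in the limit l → 1). -/
/-- For 0 < l < 1 and L = (2−l)/(1−l), the asymptotic exponent data
σ_a = L·σ₁ + 2·σ₂ (with σ₁ = (4/√6, 0), σ₂ = (−2/√6, √2)) and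
ρ_a = (L+2)·ρ₀ (with ρ₀ = 2/√3) satisfy
‖σ_a‖²/(2ρ_a²) = (3l² − 6l + 4)/(4 − 3l)² < 1. -/
theorem effective_exponent_ratio_lt_one
    (l : ℝ) (hl0 : 0 < l) (hl1 : l < 1)
    (L ρ₀ ρa : ℝ) (σ₁ σ₂ σa : EuclideanSpace ℝ (Fin 2))
    (hL : L = (2 - l) / (1 - l))
    (hσ₁ : σ₁ = (WithLp.equiv 2 (Fin 2 → ℝ)).symm ![4 / Real.sqrt 6, 0])
    (hσ₂ : σ₂ = (WithLp.equiv 2 (Fin 2 → ℝ)).symm ![-2 / Real.sqrt 6, Real.sqrt 2])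
    (hσa : σa = L • σ₁ + (2 : ℝ) • σ₂)
    (hρ₀ : ρ₀ = 2 / Real.sqrt 3)
    (hρa : ρa = (L + 2) * ρ₀) :
    ‖σa‖ ^ 2 / (2 * ρa ^ 2) = (3 * l ^ 2 - 6 * l + 4) / (4 - 3 * l) ^ 2
    ∧ (3 * l ^ 2 - 6 * l + 4) / (4 - 3 * l) ^ 2 < 1 := by
  have h1 : (1 - l) ≠ 0 := by linarith
  have h2 : 0 < 4 - 3 * l := by linarith
  have s6 : Real.sqrt 6 ^ 2 = 6 := Real.sq_sqrt (by norm_num)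
  have s2 : Real.sqrt 2 ^ 2 = 2 := Real.sq_sqrt (by norm_num)
  have s3 : Real.sqrt 3 ^ 2 = 3 := Real.sq_sqrt (by norm_num)
  have hr : ρa ^ 2 = (L + 2) ^ 2 * (4 / 3) := by
    rw [hρa, hρ₀, mul_pow, div_pow, s3]; norm_num
  have hs : ‖σa‖ ^ 2 = (4 * L - 4) ^ 2 / 6 + 8 := by
    have e0 : σa 0 = (4 * L - 4) / Real.sqrt 6 := by
      rw [hσa, hσ₁, hσ₂]; simp; ring
    have e1 : σa 1 = 2 * Real.sqrt 2 := by
      rw [hσa, hσ₁, hσ₂]; simp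
    rw [EuclideanSpace.real_norm_sq_eq, Fin.sum_univ_two, e0, e1, div_pow, mul_pow, s6, s2]
    norm_num
  have hL2 : L + 2 = (4 - 3 * l) / (1 - l) := by rw [hL]; field_simp; ring
  have hL1 : 4 * L - 4 = 4 / (1 - l) := by rw [hL]; field_simp; ring
  constructor
  · rw [hs, hr, hL2, hL1]
    have h3 := h2.ne'
    field_simp
    ring
  · rw [div_lt_one (by positivity)]
    nlinarith [mul_pos (sub_pos.2 hl1) (show (0:ℝ) < 2 - l by linarith)]
end
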